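/- Let u(x,y) = x·(y+1)^{√2} and v(x,y) = y/(y+1), defined for real x and real y > −1 (real power of a positive real). Then (u,v) satisfies the projective flow PDE for the vector field ϖ(x,y) = √2·xy, ϱ(x,y) = −y²: that is, u_x·(√2·xy − x) + u_y·(−y² − y) = −u and v_x·(√2·xy − x) + v_y·(−y² − y) = −v at every such point. -/

import Mathlib

/-!
Let `D` be differentiation along `(ϖ - x, ϱ - y)`; the projective flow PDE reads `D u = -u`.
Since `D` is a derivation, logarithmic derivatives `D u / u` turn products into sums. For
`ϖ = α x y`, `ϱ = -y²` the functions `x`, `y`, `y + 1` are eigenfunctions over the functions of `y`,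
with `D x / x = α y - 1`, `D y / y = -(y + 1)` and `D (y + 1) / (y + 1) = -y`. Hence
`x (y + 1) ^ α` has logarithmic derivative `(α y - 1) - α y = -1`, and `y / (y + 1)` has
`-(y + 1) + y = -1`.
-/

section LogDeriv

variable {𝕜 E : Type*} [NontriviallyNormedField 𝕜] [NormedAddCommGroup E] [NormedSpace 𝕜 E]
  {u v : E → 𝕜} {a b : 𝕜} {z w : E}

/-- `u` is differentiable at `z` and has logarithmic derivative `a` in the direction `w` there,
written without division so that zeros of `u` are allowed. -/
def HasLogDerivAlong (u : E → 𝕜) (a : 𝕜) (z w : E) : Prop :=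
  ∃ u' : E →L[𝕜] 𝕜, HasFDerivAt u u' z ∧ u' w = a * u z

/-- The projective flow PDE for one component `u` of a flow with vector field `W`, at the point `z`,
in coordinate-free form: `u` is differentiable at `z` with `u' (W z - z) = -u z`. In the plane, with
`W = ϖ • ϱ`, this is `u_x (ϖ - x) + u_y (ϱ - y) = -u`. -/
def SatisfiesProjectivePDEAt (W : E → E) (u : E → 𝕜) (z : E) : Prop :=
  HasLogDerivAlong u (-1) z (W z - z)

namespace HasLogDerivAlong

theorem mul (hu : HasLogDerivAlong u a z w) (hv : HasLogDerivAlong v b z w) :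
    HasLogDerivAlong (fun p ↦ u p * v p) (a + b) z w := by
  obtain ⟨u', hu', hu⟩ := hu
  obtain ⟨v', hv', hv⟩ := hv
  refine ⟨_, hu'.fun_mul hv', ?_⟩
  simp only [add_apply, smul_apply, smul_eq_mul, hu, hv]
  ring

theorem inv (hu : HasLogDerivAlong u a z w) (hz : u z ≠ 0) :
    HasLogDerivAlong (fun p ↦ (u p)⁻¹) (-a) z w := by
  obtain ⟨u', hu', hu⟩ := hu
  refine ⟨_, (hasDerivAt_inv hz).comp_hasFDerivAt z hu', ?_⟩
  simp only [smul_apply, smul_eq_mul, hu]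
  field_simp

theorem div (hu : HasLogDerivAlong u a z w) (hv : HasLogDerivAlong v b z w) (hz : v z ≠ 0) :
    HasLogDerivAlong (fun p ↦ u p / v p) (a - b) z w := by
  simpa only [div_eq_mul_inv, sub_eq_add_neg] using hu.mul (hv.inv hz)

theorem rpow_const {E : Type*} [NormedAddCommGroup E] [NormedSpace ℝ E] {u : E → ℝ} {a : ℝ}
    {z w : E} (hu : HasLogDerivAlong u a z w) (hz : u z ≠ 0) (α : ℝ) :
    HasLogDerivAlong (fun p ↦ u p ^ α) (α * a) z w := by
  obtain ⟨u', hu', hu⟩ := hu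
  refine ⟨_, hu'.rpow_const (Or.inl hz), ?_⟩
  simp only [smul_apply, smul_eq_mul, hu, Real.rpow_sub_one hz]
  field_simp

end HasLogDerivAlong

end LogDeriv

section Plane

variable {𝕜 : Type*} [NontriviallyNormedField 𝕜]

theorem deriv_fst_mul_add_deriv_snd_mul {u : 𝕜 × 𝕜 → 𝕜} {u' : 𝕜 × 𝕜 →L[𝕜] 𝕜}
    {x y : 𝕜} (hu : HasFDerivAt u u' (x, y)) (a b : 𝕜) :
    deriv (fun t ↦ u (t, y)) x * a + deriv (fun t ↦ u (x, t)) y * b = u' (a, b) := by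
  have hx : HasDerivAt (fun t ↦ u (t, y)) (u' (1, 0)) x :=
    hu.comp_hasDerivAt x ((hasDerivAt_id x).prodMk (hasDerivAt_const x y))
  have hy : HasDerivAt (fun t ↦ u (x, t)) (u' (0, 1)) y :=
    hu.comp_hasDerivAt y ((hasDerivAt_const y x).prodMk (hasDerivAt_id y))
  have hab : ((a, b) : 𝕜 × 𝕜) = a • (1, 0) + b • (0, 1) := by simp
  rw [hx.deriv, hy.deriv, hab, map_add, map_smul, map_smul, smul_eq_mul, smul_eq_mul,
    mul_comm a, mul_comm b]

theorem SatisfiesProjectivePDEAt.deriv_eq {W : 𝕜 × 𝕜 → 𝕜 × 𝕜} {u : 𝕜 × 𝕜 → 𝕜} {x y : 𝕜}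
    (hu : SatisfiesProjectivePDEAt W u (x, y)) :
    deriv (fun t ↦ u (t, y)) x * ((W (x, y)).1 - x) +
      deriv (fun t ↦ u (x, t)) y * ((W (x, y)).2 - y) = -u (x, y) := by
  obtain ⟨u', hu', hu⟩ := hu
  rw [deriv_fst_mul_add_deriv_snd_mul hu', ← neg_one_mul, ← hu]
  rfl

/-- The vector field `α x y • (-y²)`, which generates the projective flow
`x (y + 1) ^ α • y / (y + 1)`. -/
def quadraticField (α : 𝕜) (z : 𝕜 × 𝕜) : 𝕜 × 𝕜 :=
  (α * z.1 * z.2, -z.2 ^ 2)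

variable (α : 𝕜) (z : 𝕜 × 𝕜)

theorem hasLogDerivAlong_fst :
    HasLogDerivAlong Prod.fst (α * z.2 - 1) z (quadraticField α z - z) := by
  refine ⟨_, hasFDerivAt_fst, ?_⟩
  simp only [quadraticField, ContinuousLinearMap.coe_fst', Prod.fst_sub]
  ring

theorem hasLogDerivAlong_snd :
    HasLogDerivAlong Prod.snd (-(z.2 + 1)) z (quadraticField α z - z) := by
  refine ⟨_, hasFDerivAt_snd, ?_⟩
  simp only [quadraticField, ContinuousLinearMap.coe_snd', Prod.snd_sub]
  ring

theorem hasLogDerivAlong_snd_add_one :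
    HasLogDerivAlong (fun p ↦ p.2 + 1) (-z.2) z (quadraticField α z - z) := by
  refine ⟨_, hasFDerivAt_snd.add_const 1, ?_⟩
  simp only [quadraticField, ContinuousLinearMap.coe_snd', Prod.snd_sub]
  ring

theorem satisfiesProjectivePDEAt_div {z : 𝕜 × 𝕜} (hz : z.2 + 1 ≠ 0) :
    SatisfiesProjectivePDEAt (quadraticField α) (fun p ↦ p.2 / (p.2 + 1)) z := by
  have h := (hasLogDerivAlong_snd α z).div (hasLogDerivAlong_snd_add_one α z) hz
  rwa [show -(z.2 + 1) - -z.2 = -1 by ring] at h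

theorem satisfiesProjectivePDEAt_mul_rpow (α : ℝ) {z : ℝ × ℝ} (hz : z.2 + 1 ≠ 0) :
    SatisfiesProjectivePDEAt (quadraticField α) (fun p ↦ p.1 * (p.2 + 1) ^ α) z := by
  have h := (hasLogDerivAlong_fst α z).mul ((hasLogDerivAlong_snd_add_one α z).rpow_const hz α)
  rwa [show α * z.2 - 1 + α * -z.2 = -1 by ring] at h

end Plane

theorem sqrt2_flow_satisfies_PDE_general (α : ℝ) {z : ℝ × ℝ} (hz : -1 < z.2) :
    SatisfiesProjectivePDEAt (quadraticField α) (fun p ↦ p.1 * (p.2 + 1) ^ α) z ∧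
      SatisfiesProjectivePDEAt (quadraticField α) (fun p ↦ p.2 / (p.2 + 1)) z :=
  have hz' : z.2 + 1 ≠ 0 := by linarith
  ⟨satisfiesProjectivePDEAt_mul_rpow α hz', satisfiesProjectivePDEAt_div α hz'⟩

/-- `(u,v) = (x(y+1)^{√2}, y/(y+1))` satisfies the projective flow PDE for the
non-integral vector field `ϖ(x,y) = √2·xy`, `ϱ(x,y) = -y²`, for `y > -1`. -/
theorem sqrt2_flow_satisfies_PDE (x y : ℝ) (hy : y > -1) :
    deriv (fun t => t * (y + 1) ^ (Real.sqrt 2)) x * (Real.sqrt 2 * x * y - x) +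
      deriv (fun t => x * (t + 1) ^ (Real.sqrt 2)) y * (-y ^ 2 - y)
      = -(x * (y + 1) ^ (Real.sqrt 2)) ∧
    deriv (fun _ => y / (y + 1) : ℝ → ℝ) x * (Real.sqrt 2 * x * y - x) +
      deriv (fun t => t / (t + 1)) y * (-y ^ 2 - y) = -(y / (y + 1)) := by
  have ⟨hu, hv⟩ := sqrt2_flow_satisfies_PDE_general √2 (z := (x, y)) hy
  exact ⟨hu.deriv_eq, hv.deriv_eq⟩
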